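/- Let Ω⁺ ⊂ ℝ² be a Jordan domain, Ω⁻ = ℝ² \ closure(Ω⁺), and Γ = ∂Ω⁺ = ∂Ω⁻. Fix α ∈ (0,1) and C₀ > 0, and suppose there exists r₀ > 0 such that ε(x,r) ≤ C₀·r^α for all x ∈ Γ and all 0 < r ≤ r₀. Let x₀ ∈ Γ and 0 < s₀ ≤ r₀ with s₀ < (π/(6C₀))^{1/α}, and let y ∈ ∂B(x₀,s₀) ∩ Γ. Then the two intersection points a and b of the circles ∂B(x₀,s₀) and ∂B(y,s₀) do not lie on Γ (so each lies in Ω⁺ or in Ω⁻). -/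

import Mathlib

open Set Metric MeasureTheory

noncomputable section

abbrev E2 := EuclideanSpace ℝ (Fin 2)

/-- The point on the circle of center `x` and radius `r` at angle `t`. -/
def circlePt (x : E2) (r t : ℝ) : E2 :=
  x + r • (EuclideanSpace.equiv (Fin 2) ℝ).symm ![Real.cos t, Real.sin t]

/-- `A` is an open arc of the circle `∂B(x,r)`. -/
def IsOpenArc (x : E2) (r : ℝ) (A : Set E2) : Prop :=
  ∃ a b : ℝ, a < b ∧ b - a ≤ 2 * Real.pi ∧ A = circlePt x r '' Set.Ioo a b

/-- The `H¹`-measure of the largest open arc of `∂B(x,r)` contained in `Ω`. -/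
def maxArcMeasure (Ω : Set E2) (x : E2) (r : ℝ) : ℝ :=
  (⨆ A ∈ {A | IsOpenArc x r A ∧ A ⊆ Ω}, μH[1] A).toReal

/-- The Carleson ε-function of the Jordan domain `Ω⁺`, where `Ω⁻ = ℝ² \ closure Ω⁺`. -/
def carlesonEps (Ω : Set E2) (x : E2) (r : ℝ) : ℝ :=
  (1 / r) * max |Real.pi * r - maxArcMeasure Ω x r|
      |Real.pi * r - maxArcMeasure ((closure Ω)ᶜ) x r|

/-- `Γ` is a Jordan curve: the image of a continuous injective map of the unit circle. -/
def IsJordanCurve (Γ : Set E2) : Prop :=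
  ∃ f : Metric.sphere (0 : ℝ × ℝ) 1 → E2,
    Continuous f ∧ Function.Injective f ∧ Set.range f = Γ

/-- A Jordan domain: an open connected set whose boundary is a Jordan curve. -/
def IsJordanDomain (Ω : Set E2) : Prop :=
  IsOpen Ω ∧ IsConnected Ω ∧ IsJordanCurve (frontier Ω)

/-- An affine line in the plane. -/
def IsAffineLine (L : Set E2) : Prop :=
  ∃ p v : E2, v ≠ 0 ∧ L = {y | ∃ t : ℝ, y = p + t • v}

/-- The (smaller) angle between the lines spanned by `u` and `v`, an element of `[0, π/2]`. -/
def lineAngle (u v : E2) : ℝ :=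
  min (InnerProductGeometry.angle u v) (Real.pi - InnerProductGeometry.angle u v)

/-!
If `θ - φ` and `θ + φ` are the angles of two boundary points on `∂B(x, r)`, an arc of the circle in
`Ω⁺` or in `Ω⁻` lies in one of the two arcs between them, of angular lengths `2 * φ` and
`2 * π - 2 * φ`. An arc longer than `2 * φ` must lie in the second one, and if it is also longer
than half of it, it contains the midpoint, at the angle `θ + π`. When `ε(x, r)` is small this
holds for an arc in `Ω⁺` and for an arc in `Ω⁻`, although these sets are disjoint. Two points of
the circle at distance `r` correspond to `φ = π / 6`, where "small" means `ε(x, r) < π / 6`.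
-/

open scoped Real

section Periodic

variable {K : Type*} [Field K] [LinearOrder K] [IsStrictOrderedRing K] [Archimedean K]

lemma exists_add_zsmul_mem_Ioo_of_forall_notMem {p φ θ c d : K} (hp : 0 < p)
    (h_short : 2 * φ < d - c) (h_half : p / 2 - φ < d - c)
    (h_left : ∀ m : ℤ, θ - φ + m • p ∉ Ioo c d) (h_right : ∀ m : ℤ, θ + φ + m • p ∉ Ioo c d) :
    ∃ m : ℤ, θ + p / 2 + m • p ∈ Ioo c d := by
  obtain ⟨k, ⟨h_gt, h_le⟩, -⟩ := existsUnique_add_zsmul_mem_Ioc hp (θ + φ) (c - p)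
  have h_next_right : d ≤ θ + φ + k • p + p := by
    by_contra! h
    exact h_right (k + 1) (by rw [add_one_zsmul]; constructor <;> linarith)
  have h_next_left : d ≤ θ - φ + k • p + p := by
    by_contra! h
    exact h_left (k + 1) (by rw [add_one_zsmul]; constructor <;> linarith)
  exact ⟨k, by constructor <;> linarith⟩

end Periodic

section Circle

lemma circlePt_eq_circleMap (x : E2) (r : ℝ) :
    circlePt x r = Complex.orthonormalBasisOneI.repr ∘
      circleMap (Complex.orthonormalBasisOneI.repr.symm x) r := by
  funext t
  rw [Function.comp_apply, circleMap, map_add, LinearIsometryEquiv.apply_symm_apply]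
  ext i
  fin_cases i <;> simp [circlePt, Complex.exp_ofReal_mul_I_re, Complex.exp_ofReal_mul_I_im]

lemma periodic_circlePt (x : E2) (r : ℝ) : Function.Periodic (circlePt x r) (2 * π) := by
  rw [circlePt_eq_circleMap]
  exact (periodic_circleMap _ _).comp _

lemma lipschitzWith_circlePt (x : E2) (r : ℝ) : LipschitzWith (Real.nnabs r) (circlePt x r) := by
  rw [circlePt_eq_circleMap]
  simpa only [one_mul] using
    (LinearIsometryEquiv.lipschitz _).comp (lipschitzWith_circleMap _ r)

lemma range_circlePt (x : E2) (r : ℝ) : range (circlePt x r) = sphere x |r| := by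
  rw [circlePt_eq_circleMap, range_comp, range_circleMap, LinearIsometryEquiv.image_sphere,
    LinearIsometryEquiv.apply_symm_apply]

lemma dist_circleMap (c : ℂ) (r s t : ℝ) :
    dist (circleMap c r s) (circleMap c r t) = |2 * r * Real.sin ((s - t) / 2)| := by
  have h_factor : circleMap c r s - circleMap c r t =
      circleMap 0 r t * (Complex.exp (Complex.I * (s - t : ℝ)) - 1) := by
    simp only [circleMap, zero_add, add_sub_add_left_eq_sub, mul_sub, mul_one, mul_assoc,
      ← Complex.exp_add]
    push_cast
    ring_nf
  rw [dist_eq_norm, h_factor, norm_mul, norm_circleMap_zero, Complex.norm_exp_I_mul_ofReal_sub_one,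
    Real.norm_eq_abs, ← abs_mul]
  ring_nf

lemma dist_circlePt (x : E2) (r s t : ℝ) :
    dist (circlePt x r s) (circlePt x r t) = |2 * r * Real.sin ((s - t) / 2)| := by
  simp only [circlePt_eq_circleMap, Function.comp_apply, LinearIsometryEquiv.dist_map,
    dist_circleMap]

lemma exists_pair_eq_circlePt_of_dist_eq {x p q : E2} {r φ : ℝ} (hr : 0 < r)
    (hp : p ∈ sphere x r) (hq : q ∈ sphere x r) (hpq : dist p q = |2 * r * Real.sin φ|) :
    ∃ θ, ({p, q} : Set E2) = {circlePt x r (θ - φ), circlePt x r (θ + φ)} := by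
  rw [← abs_of_pos hr, ← range_circlePt] at hp hq
  obtain ⟨s, rfl⟩ := hp
  obtain ⟨t, rfl⟩ := hq
  have h_sin : Real.sin φ ^ 2 = Real.sin ((s - t) / 2) ^ 2 := by
    rw [dist_circlePt, abs_mul, abs_mul _ (Real.sin φ)] at hpq
    exact sq_eq_sq_iff_abs_eq_abs _ _ |>.2 (mul_left_cancel₀ (by positivity) hpq).symm
  have h_cos : Real.cos (2 * φ) = Real.cos (s - t) := by
    rw [← mul_div_cancel₀ (s - t) two_ne_zero, Real.cos_two_mul, Real.cos_two_mul,
      Real.cos_sq', Real.cos_sq', h_sin]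
  obtain ⟨k, hk | hk⟩ := Real.cos_eq_cos_iff.1 h_cos
  · refine ⟨t + φ, ?_⟩
    rw [pair_comm, add_sub_cancel_right, ← (periodic_circlePt x r).int_mul k (t + φ + φ)]
    congr! 3
    linarith
  · refine ⟨s + φ, ?_⟩
    rw [add_sub_cancel_right, ← (periodic_circlePt x r).int_mul k t]
    congr! 3
    linarith

lemma hausdorffMeasure_circlePt_image_Ioo_le (x : E2) (r c d : ℝ) :
    μH[1] (circlePt x r '' Ioo c d) ≤ ENNReal.ofReal (|r| * (d - c)) := by
  have h := (lipschitzWith_circlePt x r).hausdorffMeasure_image_le zero_le_one (Ioo c d)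
  rw [hausdorffMeasure_real, Real.volume_Ioo, ENNReal.rpow_one] at h
  rwa [ENNReal.ofReal_mul (abs_nonneg r), ENNReal.ofReal, Real.toNNReal_abs]

end Circle

section CarlesonEps

variable {Ω : Set E2} {x : E2} {r θ φ : ℝ}

lemma exists_image_Ioo_subset_of_mul_lt_maxArcMeasure {l : ℝ} (hr : 0 < r) (hl : 0 ≤ l)
    (h : l * r < maxArcMeasure Ω x r) :
    ∃ c d, l < d - c ∧ circlePt x r '' Ioo c d ⊆ Ω := by
  have h_sup : ENNReal.ofReal (l * r) < ⨆ A ∈ {A | IsOpenArc x r A ∧ A ⊆ Ω}, μH[1] A := by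
    contrapose! h
    exact ENNReal.toReal_le_of_le_ofReal (by positivity) h
  simp only [lt_iSup_iff] at h_sup
  obtain ⟨_, ⟨⟨c, d, -, -, rfl⟩, h_sub⟩, h_lt⟩ := h_sup
  have h_len := h_lt.trans_le (hausdorffMeasure_circlePt_image_Ioo_le x r c d)
  rw [abs_of_pos hr, mul_comm] at h_len
  exact ⟨c, d, lt_of_mul_lt_mul_left (ENNReal.ofReal_lt_ofReal_iff'.1 h_len).1 hr.le, h_sub⟩

lemma circlePt_add_pi_mem_of_lt_maxArcMeasure (hr : 0 < r)
    (h_left : circlePt x r (θ - φ) ∉ Ω) (h_right : circlePt x r (θ + φ) ∉ Ω)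
    (h : max (2 * φ) (π - φ) * r < maxArcMeasure Ω x r) :
    circlePt x r (θ + π) ∈ Ω := by
  have h_nonneg : 0 ≤ max (2 * φ) (π - φ) := by
    linarith [le_max_left (2 * φ) (π - φ), le_max_right (2 * φ) (π - φ), Real.pi_pos]
  obtain ⟨c, d, h_len, h_sub⟩ := exists_image_Ioo_subset_of_mul_lt_maxArcMeasure hr h_nonneg h
  have h_translate (s : ℝ) (m : ℤ) (hs : s + m • (2 * π) ∈ Ioo c d) : circlePt x r s ∈ Ω := by
    rw [← (periodic_circlePt x r).zsmul m s]
    exact h_sub (mem_image_of_mem _ hs)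
  obtain ⟨m, hm⟩ := exists_add_zsmul_mem_Ioo_of_forall_notMem Real.two_pi_pos
    ((le_max_left _ _).trans_lt h_len)
    (by rw [mul_div_cancel_left₀ π two_ne_zero]; exact (le_max_right _ _).trans_lt h_len)
    (fun m hm ↦ h_left (h_translate _ m hm)) (fun m hm ↦ h_right (h_translate _ m hm))
  rw [mul_div_cancel_left₀ π two_ne_zero] at hm
  exact h_translate _ m hm

lemma pi_sub_carlesonEps_mul_le_min_maxArcMeasure (Ω : Set E2) (x : E2) (hr : 0 < r) :
    (π - carlesonEps Ω x r) * r ≤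
      min (maxArcMeasure Ω x r) (maxArcMeasure (closure Ω)ᶜ x r) := by
  have h_eps : carlesonEps Ω x r * r = max |π * r - maxArcMeasure Ω x r|
      |π * r - maxArcMeasure (closure Ω)ᶜ x r| := by
    rw [carlesonEps]
    field_simp
  obtain ⟨h, h'⟩ := max_le_iff.1 h_eps.ge
  rw [sub_mul]
  exact le_min (by linarith [(abs_le.1 h).2]) (by linarith [(abs_le.1 h').2])

lemma not_circlePt_pair_subset_frontier (hΩ : IsOpen Ω) (hr : 0 < r)
    (h_eps : carlesonEps Ω x r < φ) (h_eps' : carlesonEps Ω x r < π - 2 * φ) :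
    ¬ {circlePt x r (θ - φ), circlePt x r (θ + φ)} ⊆ frontier Ω := by
  rw [pair_subset_iff]
  rintro ⟨h_left, h_right⟩
  have h_arcs : max (2 * φ) (π - φ) * r <
      min (maxArcMeasure Ω x r) (maxArcMeasure (closure Ω)ᶜ x r) := by
    refine lt_of_lt_of_le ?_ (pi_sub_carlesonEps_mul_le_min_maxArcMeasure Ω x hr)
    gcongr
    exact max_lt (by linarith) (by linarith)
  have h_out {z : E2} (hz : z ∈ frontier Ω) : z ∉ Ω :=
    fun h ↦ disjoint_left.1 (disjoint_frontier_iff_isOpen.2 hΩ) hz h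
  have h_out' {z : E2} (hz : z ∈ frontier Ω) : z ∉ (closure Ω)ᶜ :=
    notMem_compl_iff.2 (frontier_subset_closure hz)
  have h_mem : circlePt x r (θ + π) ∈ Ω := circlePt_add_pi_mem_of_lt_maxArcMeasure hr
    (h_out h_left) (h_out h_right) (h_arcs.trans_le (min_le_left _ _))
  have h_mem' : circlePt x r (θ + π) ∈ (closure Ω)ᶜ := circlePt_add_pi_mem_of_lt_maxArcMeasure hr
    (h_out' h_left) (h_out' h_right) (h_arcs.trans_le (min_le_right _ _))
  exact h_mem' (subset_closure h_mem)

lemma not_pair_subset_frontier_of_dist_eq {p q : E2} (hΩ : IsOpen Ω) (hr : 0 < r)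
    (h_eps : carlesonEps Ω x r < φ) (h_eps' : carlesonEps Ω x r < π - 2 * φ)
    (hp : p ∈ sphere x r) (hq : q ∈ sphere x r) (hpq : dist p q = |2 * r * Real.sin φ|) :
    ¬ {p, q} ⊆ frontier Ω := by
  obtain ⟨θ, h_pair⟩ := exists_pair_eq_circlePt_of_dist_eq hr hp hq hpq
  rw [h_pair]
  exact not_circlePt_pair_subset_frontier hΩ hr h_eps h_eps'

end CarlesonEps

lemma mul_rpow_lt_of_lt_div_rpow {s k C α : ℝ} (hs : 0 ≤ s) (hk : 0 ≤ k) (hC : 0 < C) (hα : 0 < α)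
    (h : s < (k / C) ^ (1 / α)) : C * s ^ α < k := by
  rwa [one_div, Real.lt_rpow_inv_iff_of_pos hs (by positivity) hα, lt_div_iff₀' hC] at h

theorem circle_intersections_off_boundary_general {Ω : Set E2} (hΩ : IsOpen Ω) {x : E2} {r : ℝ}
    (hr : 0 < r) (h_eps : carlesonEps Ω x r < π / 6) {y : E2} (hy : y ∈ sphere x r ∩ frontier Ω)
    {a : E2} (ha : a ∈ sphere x r ∩ sphere y r) : a ∉ frontier Ω := by
  intro ha_frontier
  refine not_pair_subset_frontier_of_dist_eq hΩ hr h_eps (by linarith [Real.pi_pos]) ha.1 hy.1 ?_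
    (pair_subset ha_frontier hy.2)
  rw [mem_sphere.1 ha.2, Real.sin_pi_div_six, mul_right_comm, mul_one_div_cancel two_ne_zero,
    one_mul, abs_of_pos hr]

/-- The two intersection points of the circles `∂B(x₀,s₀)` and `∂B(y,s₀)`, for `x₀, y ∈ Γ`
at distance `s₀` with `s₀ < (π/(6C₀))^{1/α}`, do not lie on `Γ`. -/
theorem circle_intersections_off_boundary (Ωp : Set E2) (hΩ : IsJordanDomain Ωp)
    (Ωm : Set E2) (hΩm : Ωm = (closure Ωp)ᶜ)
    (Γ : Set E2) (hΓp : Γ = frontier Ωp) (hΓm : Γ = frontier Ωm)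
    (α C₀ : ℝ) (hα : α ∈ Set.Ioo (0 : ℝ) 1) (hC₀ : 0 < C₀)
    (r₀ : ℝ) (hr₀ : 0 < r₀)
    (hε : ∀ x ∈ Γ, ∀ r : ℝ, 0 < r → r ≤ r₀ → carlesonEps Ωp x r ≤ C₀ * r ^ α)
    (x₀ : E2) (hx₀ : x₀ ∈ Γ) (s₀ : ℝ) (hs₀ : 0 < s₀) (hs₀r : s₀ ≤ r₀)
    (hs₀small : s₀ < (Real.pi / (6 * C₀)) ^ (1 / α))
    (y : E2) (hy : y ∈ Metric.sphere x₀ s₀ ∩ Γ)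
    (a b : E2) (hab : a ≠ b)
    (ha : a ∈ Metric.sphere x₀ s₀ ∩ Metric.sphere y s₀)
    (hb : b ∈ Metric.sphere x₀ s₀ ∩ Metric.sphere y s₀) :
    a ∉ Γ ∧ b ∉ Γ := by
  have h_eps : carlesonEps Ωp x₀ s₀ < π / 6 := by
    have h_rpow := mul_rpow_lt_of_lt_div_rpow hs₀.le Real.pi_nonneg (by positivity) hα.1 hs₀small
    linarith [hε x₀ hx₀ s₀ hs₀ hs₀r]
  subst hΓp
  exact ⟨circle_intersections_off_boundary_general hΩ.1 hs₀ h_eps hy ha,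
    circle_intersections_off_boundary_general hΩ.1 hs₀ h_eps hy hb⟩

end
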